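/- Let (A, φ) be a noncommutative probability space, Φ̃ : H_S(A) → ℂ the character extending φ, and ρ̃ = log*(Φ̃) (the logarithm with respect to the convolution product, i.e., ρ̃ = Σ_{k≥1} ((−1)^{k+1}/k) (Φ̃ − ε_A)^{*k}). Then for every n ≥ 1, every t ∈ ST(n) and every word w = a_1⋯a_n with a_i ∈ A, ρ̃(t ⊗ w) = ω(sk(t)) · φ_{π(t)}(a_1,…,a_n). -/

import Mathlib

open scoped BigOperators

/-- Planar rooted trees (rose trees). -/
inductive PTree : Type
  | node : List PTree → PTree

namespace PTree

/-- The single-vertex tree (a leaf). -/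
abbrev leaf : PTree := .node []

/-- Subtree at a given path from the root (entries select children). -/
def subtreeAt : List ℕ → PTree → Option PTree
  | [], t => some t
  | i :: p, node cs => (cs[i]?).bind (subtreeAt p)

/-- `p` is (the path of) a vertex of `t`. -/
def IsVertex (t : PTree) (p : List ℕ) : Prop := (subtreeAt p t).isSome

/-- `p` is a leaf of `t`. -/
def IsLeafAt (t : PTree) (p : List ℕ) : Prop := subtreeAt p t = some leaf

/-- `p` is an internal (non-leaf) vertex of `t`. -/
def IsInternalAt (t : PTree) (p : List ℕ) : Prop :=
  ∃ cs, subtreeAt p t = some (node cs) ∧ cs ≠ []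

/-- Schröder trees: every internal vertex has at least two children. -/
inductive IsSchroder : PTree → Prop
  | leaf : IsSchroder (node [])
  | node (cs : List PTree) : 2 ≤ cs.length → (∀ c ∈ cs, IsSchroder c) → IsSchroder (node cs)

/-- Number of leaves of a tree. -/
noncomputable def numLeaves (t : PTree) : ℕ := Nat.card {p : List ℕ // IsLeafAt t p}

/-- Number of sectors between consecutive leaves. -/
noncomputable def numSectors (t : PTree) : ℕ := numLeaves t - 1

/-- Number of internal vertices. -/
noncomputable def numInternal (t : PTree) : ℕ := Nat.card {p : List ℕ // IsInternalAt t p}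

/-- The set of Schröder trees with `n+1` leaves. -/
def ST (n : ℕ) : Set PTree := {t | IsSchroder t ∧ numLeaves t = n + 1}

/-- Number of surjective strictly order-preserving maps from the poset of internal
vertices of `t` (i.e. the vertex poset of the skeleton `sk(t)`, with the root minimal,
the order being the ancestor/prefix order) onto `{1, …, k}`. This is `ω_k(sk(t))`. -/
noncomputable def omegaSkK (t : PTree) (k : ℕ) : ℕ :=
  Nat.card {f : {p : List ℕ // IsInternalAt t p} → Fin k //
    Function.Surjective f ∧ ∀ v w, v.1 <+: w.1 → v ≠ w → f v < f w}

/-- The Murua coefficient `ω(sk(t))` of the skeleton of `t`. -/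
noncomputable def omegaSk (t : PTree) : ℂ :=
  ∑ k ∈ Finset.Icc 1 (numInternal t), ((-1 : ℂ) ^ (k + 1) / (k : ℂ)) * (omegaSkK t k : ℂ)

/-- The subtree of `t` at path `p` (junk value: a leaf). -/
noncomputable def subtree! (t : PTree) (p : List ℕ) : PTree := (subtreeAt p t).getD leaf

/-- Number of leaves of `t` strictly to the left of the subtree at `p`. -/
noncomputable def leavesBefore (t : PTree) (p : List ℕ) : ℕ :=
  Nat.card {q : List ℕ // IsLeafAt t q ∧ List.Lex (· < ·) q p ∧ ¬ p <+: q}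

/-- Sector number `i` (0-indexed: the sector between the `(i+1)`-st and `(i+2)`-nd leaves of `t`)
lies strictly inside the subtree of `t` rooted at `p`. -/
def SectorIn (t : PTree) (p : List ℕ) (i : ℕ) : Prop :=
  leavesBefore t p ≤ i ∧ i + 2 ≤ leavesBefore t p + numLeaves (subtree! t p)

/-- The internal vertex `v` of `t` owns sector `i`: the sector lies in the corolla at `v`,
i.e. inside the subtree at `v` but not inside the subtree at any strictly deeper vertex. -/
def OwnsSector (t : PTree) (v : List ℕ) (i : ℕ) : Prop :=
  IsInternalAt t v ∧ SectorIn t v i ∧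
    ∀ w, IsInternalAt t w → v <+: w → w ≠ v → ¬ SectorIn t w i

/-- Sectors `i` and `j` belong to the same block of the noncrossing partition `π(t)`. -/
def SameOwner (t : PTree) (i j : ℕ) : Prop := ∃ v, OwnsSector t v i ∧ OwnsSector t v j

open Classical in
/-- `φ_{π(t)}(a_1,…,a_n)`: the product over the blocks of the noncrossing partition `π(t)`
(one block per internal vertex `v`, consisting of the sectors owned by `v`) of `φ` applied to
the ordered product of the corresponding letters of `w`. -/
noncomputable def phiPi {A : Type*} [Ring A] (φ : A → ℂ) (t : PTree) (w : List A) : ℂ :=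
  ∏ᶠ v ∈ {v : List ℕ | IsInternalAt t v},
    φ ((((List.range w.length).filter fun i => OwnsSector t v i).map fun i => w.getD i 0).prod)

/-- A corolla: a root whose (at least two) children are all leaves. -/
def corolla (m : ℕ) : PTree := node (List.replicate m leaf)

/-- `t` is a corolla. -/
def IsCorolla (t : PTree) : Prop := ∃ m, 2 ≤ m ∧ t = corolla m

/-- Graft a tree `s` onto the leftmost leaf of `t`. -/
def graftLeftmost : PTree → PTree → PTree
  | node [], s => s
  | node (c :: cs), s => node (graftLeftmost c s :: cs)

/-- Trees obtained from the single-vertex tree by repeatedly grafting a corolla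
onto the leftmost leaf. -/
inductive IsBST : PTree → Prop
  | single : IsBST leaf
  | graft (t : PTree) (m : ℕ) : IsBST t → 2 ≤ m → IsBST (graftLeftmost t (corolla m))

/-- Schröder trees whose leftmost child of the root is a leaf. -/
def IsPST (t : PTree) : Prop := ∃ cs, t = node (leaf :: cs)

end PTree
namespace PTree

mutual
  /-- List of all vertex paths of a tree. -/
  def verticesList : PTree → List (List ℕ)
    | .node cs => [] :: verticesListAux 0 cs
  def verticesListAux : ℕ → List PTree → List (List ℕ)
    | _, [] => []
    | i, c :: cs => (verticesList c).map (i :: ·) ++ verticesListAux (i + 1) cs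
end

open Classical in
/-- The `Finset` of internal vertices of `t`. -/
noncomputable def internalFinset (t : PTree) : Finset (List ℕ) :=
  ((verticesList t).filter fun p => decide (IsInternalAt t p)).toFinset

open Classical in
/-- The admissible cuts of a Schröder tree `t`: sets of internal vertices such that every
path from the root to a leaf contains at most one of them (equivalently, antichains for
the ancestor/prefix order). -/
noncomputable def cutsFinset (t : PTree) : Finset (Finset (List ℕ)) :=
  (internalFinset t).powerset.filter fun c => ∀ v ∈ c, ∀ w ∈ c, v ≠ w → ¬ v <+: w

/-- A vertex path lies on the leftmost branch iff it consists of zeros. -/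
def OnLeftBranch (v : List ℕ) : Prop := v = List.replicate v.length 0

open Classical in
/-- `Adm_≺(t)`: admissible cuts whose trunk contains the leftmost leaf of `t`,
i.e. cuts containing no vertex of the leftmost branch. -/
noncomputable def cutsPrecFinset (t : PTree) : Finset (Finset (List ℕ)) :=
  (cutsFinset t).filter fun c => ∀ v ∈ c, ¬ OnLeftBranch v

open Classical in
/-- `Adm(t) \ Adm_≺(t)`: the admissible cuts containing a vertex of the leftmost branch. -/
noncomputable def cutsSuccFinset (t : PTree) : Finset (Finset (List ℕ)) :=
  (cutsFinset t).filter fun c => ∃ v ∈ c, OnLeftBranch v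

/-- Replace the subtree at a given path by a leaf. -/
def replaceLeaf : List ℕ → PTree → PTree
  | [], _ => leaf
  | i :: p, node cs => node (cs.set i (replaceLeaf p (cs.getD i leaf)))

/-- The vertices of a cut, sorted from left to right. -/
noncomputable def sortCut (t : PTree) (c : Finset (List ℕ)) : List (List ℕ) :=
  c.toList.mergeSort fun v w => Nat.ble (leavesBefore t v) (leavesBefore t w)

/-- The trunk `R_c(t)`: replace the subtree at each vertex of the cut by a leaf. -/
noncomputable def trunkTree (t : PTree) (c : Finset (List ℕ)) : PTree :=
  (sortCut t c).foldl (fun s v => replaceLeaf v s) t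

open Classical in
/-- Sector `i` of `t` is removed by the cut `c` (it lies in one of the pruned subtrees). -/
noncomputable def RemovedIdx (t : PTree) (c : Finset (List ℕ)) (i : ℕ) : Prop :=
  ∃ v ∈ c, leavesBefore t v ≤ i ∧ i < leavesBefore t v + numSectors (subtree! t v)

/-- A decorated forest: a list of Schröder trees, each `t` decorated by a word of length
`numSectors t` labelling the sectors between consecutive leaves from left to right. -/
abbrev DForest (A : Type*) := List (PTree × List A)

/-- A genuine decorated tree: a non-unit Schröder tree with matching decoration. -/
def GoodTree {A : Type*} (d : PTree × List A) : Prop :=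
  IsSchroder d.1 ∧ d.1 ≠ leaf ∧ d.2.length = numSectors d.1

/-- A genuine decorated forest. -/
def GoodForest {A : Type*} (F : DForest A) : Prop := ∀ d ∈ F, GoodTree d

open Classical in
/-- The decoration of the trunk `R_c(t ⊗ w)`: the letters of `w` at the sectors
not removed by the cut, in their original order. -/
noncomputable def trunkWord {A : Type*} [Zero A] (t : PTree) (c : Finset (List ℕ))
    (w : List A) : List A :=
  (((List.range w.length).filter fun i => decide (¬ RemovedIdx t c i)).map fun i => w.getD i 0)

open Classical in
/-- The trunk `R_c(t ⊗ w)` as a decorated forest (empty if the trunk is the unit,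
i.e. the single-leaf tree, which is identified with `1`). -/
noncomputable def trunkPart {A : Type*} [Zero A] (d : PTree × List A)
    (c : Finset (List ℕ)) : DForest A :=
  if trunkTree d.1 c = leaf then [] else [(trunkTree d.1 c, trunkWord d.1 c d.2)]

/-- The pruning `P_c(t ⊗ w)`: the ordered forest of decorated subtrees rooted at the
vertices of the cut (left to right), each carrying the contiguous subword of `w`
decorating its sectors. -/
noncomputable def prunePart {A : Type*} (d : PTree × List A)
    (c : Finset (List ℕ)) : DForest A :=
  (sortCut d.1 c).map fun v =>
    (subtree! d.1 v, (d.2.drop (leavesBefore d.1 v)).take (numSectors (subtree! d.1 v)))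

/-- All splittings `R_c(F) ⊗ P_c(F)` of a decorated forest given by tuples of admissible
cuts (one cut per tree): the combinatorial coproduct `δ_A`. -/
noncomputable def forestSplits {A : Type*} [Zero A] :
    DForest A → List (DForest A × DForest A)
  | [] => [([], [])]
  | d :: ds => (cutsFinset d.1).toList.flatMap fun c =>
      (forestSplits ds).map fun pr => (trunkPart d c ++ pr.1, prunePart d c ++ pr.2)

/-- The splittings appearing in `δ_{≺,A}`: the first tree is cut along `Adm_≺`, the
remaining ones along all admissible cuts. -/
noncomputable def forestSplitsPrec {A : Type*} [Zero A] :
    DForest A → List (DForest A × DForest A)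
  | [] => []
  | d :: ds => (cutsPrecFinset d.1).toList.flatMap fun c =>
      (forestSplits ds).map fun pr => (trunkPart d c ++ pr.1, prunePart d c ++ pr.2)

/-- The splittings appearing in `δ_{≻,A} = δ_A − δ_{≺,A}`. -/
noncomputable def forestSplitsSucc {A : Type*} [Zero A] :
    DForest A → List (DForest A × DForest A)
  | [] => []
  | d :: ds => (cutsSuccFinset d.1).toList.flatMap fun c =>
      (forestSplits ds).map fun pr => (trunkPart d c ++ pr.1, prunePart d c ++ pr.2)

/-- The convolution product `f * g = m_ℂ ∘ (f ⊗ g) ∘ δ_A` of linear functionals on the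
Hopf algebra `H_S(A)` of decorated Schröder trees (described on the basis of decorated
forests). -/
noncomputable def convD {A : Type*} [Zero A] (f g : DForest A → ℂ) : DForest A → ℂ :=
  fun F => ((forestSplits F).map fun pr => f pr.1 * g pr.2).sum

/-- The left half-shuffle product `f ≺̃ g = m_ℂ ∘ (f ⊗ g) ∘ δ_{≺,A}`. -/
noncomputable def precD {A : Type*} [Zero A] (f g : DForest A → ℂ) : DForest A → ℂ :=
  fun F => ((forestSplitsPrec F).map fun pr => f pr.1 * g pr.2).sum

/-- The right half-shuffle product `f ≻̃ g = m_ℂ ∘ (f ⊗ g) ∘ δ_{≻,A}`. -/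
noncomputable def succD {A : Type*} [Zero A] (f g : DForest A → ℂ) : DForest A → ℂ :=
  fun F => ((forestSplitsSucc F).map fun pr => f pr.1 * g pr.2).sum

open Classical in
/-- The counit `ε_A` of `H_S(A)` as a functional. -/
noncomputable def epsD {A : Type*} : DForest A → ℂ := fun F => if F = [] then 1 else 0

open Classical in
/-- The character `Φ̃ : H_S(A) → ℂ` extending `φ`: it sends a decorated tree `t ⊗ w` to
`φ(a_1 ⋯ a_n)` if `t` is a corolla and to `0` otherwise, multiplicatively on forests. -/
noncomputable def charD {A : Type*} [Ring A] (φ : A → ℂ) : DForest A → ℂ :=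
  fun F => (F.map fun d => if IsCorolla d.1 then φ d.2.prod else 0).prod

/-- `Φ̂ = Φ̃ − ε_A`. -/
noncomputable def charHatD {A : Type*} [Ring A] (φ : A → ℂ) : DForest A → ℂ :=
  fun F => charD φ F - epsD F

/-- Convolution powers `f^{*k}` (with `f^{*0} = ε_A`). -/
noncomputable def convPowD {A : Type*} [Zero A] (f : DForest A → ℂ) : ℕ → DForest A → ℂ
  | 0 => epsD
  | k + 1 => convD f (convPowD f k)

/-- Left half-shuffle powers `α^{≺̃ k}`, with `α^{≺̃ 0} = ε_A` and
`α^{≺̃ k} = α ≺̃ α^{≺̃ (k−1)}`. -/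
noncomputable def precPowD {A : Type*} [Zero A] (α : DForest A → ℂ) : ℕ → DForest A → ℂ
  | 0 => epsD
  | k + 1 => precD α (precPowD α k)

/-- Right half-shuffle powers `α^{≻̃ k}`, with `α^{≻̃ 0} = ε_A` and
`α^{≻̃ k} = α^{≻̃ (k−1)} ≻̃ α`. -/
noncomputable def succPowD {A : Type*} [Zero A] (α : DForest A → ℂ) : ℕ → DForest A → ℂ
  | 0 => epsD
  | k + 1 => succD (succPowD α k) α

/-- The left half-shuffle exponential `E_≺̃(α) = Σ_{k ≥ 0} α^{≺̃ k}`. -/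
noncomputable def ePrecD {A : Type*} [Zero A] (α : DForest A → ℂ) : DForest A → ℂ :=
  fun F => ∑ᶠ k : ℕ, precPowD α k F

/-- The right half-shuffle exponential `E_≻̃(α) = Σ_{k ≥ 0} α^{≻̃ k}`. -/
noncomputable def eSuccD {A : Type*} [Zero A] (α : DForest A → ℂ) : DForest A → ℂ :=
  fun F => ∑ᶠ k : ℕ, succPowD α k F

/-- The convolution exponential `exp^*(α) = Σ_{k ≥ 0} α^{*k} / k!`. -/
noncomputable def expStarD {A : Type*} [Zero A] (α : DForest A → ℂ) : DForest A → ℂ :=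
  fun F => ∑ᶠ k : ℕ, ((k.factorial : ℂ))⁻¹ * convPowD α k F

/-- The convolution logarithm `log^*(Φ̃) = Σ_{k ≥ 1} ((−1)^{k+1}/k) (Φ̃ − ε_A)^{*k}`. -/
noncomputable def logStarD {A : Type*} [Ring A] (φ : A → ℂ) : DForest A → ℂ :=
  fun F => ∑ᶠ k ∈ Set.Ici (1 : ℕ), ((-1 : ℂ) ^ (k + 1) / (k : ℂ)) * convPowD (charHatD φ) k F

/-- An infinitesimal character of `H_S(A)`: it vanishes on the unit (empty forest) and on
products of two or more nonempty forests. -/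
def IsInfCharD {A : Type*} (α : DForest A → ℂ) : Prop :=
  α [] = 0 ∧ ∀ F G : DForest A, F ≠ [] → G ≠ [] → α (F ++ G) = 0

end PTree

namespace PTree

theorem subtreeAt_leaf_cons (i : ℕ) (p : List ℕ) : subtreeAt (i :: p) leaf = none := by
  simp [subtreeAt]

theorem subtreeAt_node_cons (cs : List PTree) (i : ℕ) (p : List ℕ) (hi : i < cs.length) :
    subtreeAt (i :: p) (node cs) = subtreeAt p (cs.getD i leaf) := by
  simp [subtreeAt, hi]

theorem subtreeAt_node_cons_of_le (cs : List PTree) (i : ℕ) (p : List ℕ) (hi : cs.length ≤ i) :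
    subtreeAt (i :: p) (node cs) = none := by
  simp [subtreeAt, hi]

theorem not_isInternalAt_leaf (p : List ℕ) : ¬ IsInternalAt leaf p := by
  rintro ⟨cs, h, hne⟩
  cases p with
  | nil => simp [subtreeAt] at h; exact hne h
  | cons i p => simp [subtreeAt_leaf_cons] at h

theorem isInternalAt_nil {cs : List PTree} : IsInternalAt (node cs) [] ↔ cs ≠ [] := by
  simp [IsInternalAt, subtreeAt]

theorem isInternalAt_cons {cs : List PTree} {i : ℕ} {p : List ℕ} :
    IsInternalAt (node cs) (i :: p) ↔ IsInternalAt (cs.getD i leaf) p := by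
  rcases lt_or_ge i cs.length with hi | hi
  · simp only [IsInternalAt, subtreeAt_node_cons cs i p hi]
  · rw [List.getD_eq_default _ _ hi]
    refine iff_of_false ?_ (not_isInternalAt_leaf p)
    simp [IsInternalAt, subtreeAt_node_cons_of_le cs i p hi]

theorem isInternalAt_nil_iff_ne_leaf {t : PTree} : IsInternalAt t [] ↔ t ≠ leaf := by
  cases t; simp [isInternalAt_nil, leaf]

theorem IsInternalAt.ne_leaf {t : PTree} {p : List ℕ} (h : IsInternalAt t p) : t ≠ leaf := by
  rintro rfl; exact not_isInternalAt_leaf p h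

theorem isLeafAt_nil {cs : List PTree} : IsLeafAt (node cs) [] ↔ cs = [] := by
  simp [IsLeafAt, subtreeAt]

theorem isLeafAt_cons {cs : List PTree} {i : ℕ} {p : List ℕ} :
    IsLeafAt (node cs) (i :: p) ↔ i < cs.length ∧ IsLeafAt (cs.getD i leaf) p := by
  rcases lt_or_ge i cs.length with hi | hi
  · simp only [IsLeafAt, subtreeAt_node_cons cs i p hi, hi, true_and]
  · simp [IsLeafAt, subtreeAt_node_cons_of_le cs i p hi, hi.not_gt]

theorem subtree!_nil (t : PTree) : subtree! t [] = t := by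
  simp [subtree!, subtreeAt]

theorem subtree!_leaf (p : List ℕ) : subtree! leaf p = leaf := by
  cases p <;> simp [subtree!, subtreeAt]

theorem subtree!_cons (cs : List PTree) (i : ℕ) (p : List ℕ) :
    subtree! (node cs) (i :: p) = subtree! (cs.getD i leaf) p := by
  rcases lt_or_ge i cs.length with hi | hi
  · simp only [subtree!, subtreeAt_node_cons cs i p hi]
  · rw [List.getD_eq_default _ _ hi, subtree!_leaf, subtree!, subtreeAt_node_cons_of_le cs i p hi]
    rfl

theorem mem_verticesListAux {q : List ℕ} {cs : List PTree} {i : ℕ} (o : ℕ) (hi : i < cs.length)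
    (h : q ∈ verticesList cs[i]) : (o + i) :: q ∈ verticesListAux o cs := by
  induction cs generalizing i o with
  | nil => simp at hi
  | cons c cs ih =>
    rw [verticesListAux, List.mem_append]
    cases i with
    | zero => left; simpa using h
    | succ i =>
      right
      have := ih (o + 1) (i := i) (by simpa using hi) (by simpa using h)
      rwa [show o + (i + 1) = o + 1 + i by ring]

theorem mem_verticesList {p : List ℕ} {t : PTree} (h : IsVertex t p) : p ∈ verticesList t := by
  induction p generalizing t with
  | nil => cases t; simp [verticesList]
  | cons i p ih =>
    obtain ⟨cs⟩ := t
    rcases lt_or_ge i cs.length with hi | hi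
    · rw [IsVertex, subtreeAt_node_cons cs i p hi] at h
      rw [verticesList]
      have := mem_verticesListAux 0 hi (q := p) (by simpa [hi] using ih h)
      simp at this ⊢
      exact this
    · simp [IsVertex, subtreeAt_node_cons_of_le cs i p hi] at h

theorem IsInternalAt.isVertex {t : PTree} {p : List ℕ} (h : IsInternalAt t p) : IsVertex t p := by
  obtain ⟨cs, h, -⟩ := h; simp [IsVertex, h]

theorem mem_internalFinset {t : PTree} {p : List ℕ} : p ∈ internalFinset t ↔ IsInternalAt t p := by
  simp only [internalFinset, List.mem_toFinset, List.mem_filter, decide_eq_true_eq,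
    and_iff_right_iff_imp]
  exact fun h => mem_verticesList h.isVertex

instance finite_isInternalAt (t : PTree) : Finite {p // IsInternalAt t p} :=
  ((internalFinset t).finite_toSet.subset fun _ hp => mem_internalFinset.2 hp).to_subtype

theorem finite_isLeafAt (t : PTree) : {p | IsLeafAt t p}.Finite := by
  refine (verticesList t).finite_toSet.subset fun p hp => mem_verticesList ?_
  rw [Set.mem_ofPred_eq, IsLeafAt] at hp
  simp [IsVertex, hp]

/-- Counting paths by their first entry. -/
theorem card_paths_eq_sum {Q : List ℕ → Prop} (n : ℕ) (hfin : {q | Q q}.Finite) (h0 : ¬ Q [])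
    (hn : ∀ j q, Q (j :: q) → j < n) :
    Nat.card {q // Q q} = ∑ j ∈ Finset.range n, Nat.card {q // Q (j :: q)} := by
  have hf (j : ℕ) : Finite {q // Q (j :: q)} :=
    (hfin.preimage (f := fun q => j :: q) (by intro a _ b _ h; simpa using h)).to_subtype
  rw [Finset.sum_range (fun j => Nat.card {q // Q (j :: q)}), ← Nat.card_sigma]
  symm
  refine Nat.card_eq_of_bijective
    (fun x : Σ j : Fin n, {q // Q ((j : ℕ) :: q)} => (⟨x.1 :: x.2.1, x.2.2⟩ : {q // Q q})) ⟨?_, ?_⟩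
  · rintro ⟨⟨i, hi⟩, q, hq⟩ ⟨⟨j, hj⟩, r, hr⟩ h
    simp only [Subtype.mk.injEq, List.cons.injEq] at h
    obtain ⟨rfl, rfl⟩ := h
    rfl
  · rintro ⟨q, hq⟩
    cases q with
    | nil => exact absurd hq h0
    | cons j q => exact ⟨⟨⟨j, hn j q hq⟩, q, hq⟩, rfl⟩

theorem isLeafAt_leaf {p : List ℕ} : IsLeafAt leaf p ↔ p = [] := by
  cases p <;> simp [IsLeafAt, subtreeAt]

theorem numLeaves_leaf : numLeaves leaf = 1 := by
  rw [numLeaves, Nat.card_eq_one_iff_unique]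
  refine ⟨⟨?_⟩, ⟨⟨[], isLeafAt_leaf.2 rfl⟩⟩⟩
  rintro ⟨p, hp⟩ ⟨q, hq⟩
  rw [isLeafAt_leaf] at hp hq
  subst hp hq
  rfl

theorem numLeaves_node {cs : List PTree} (h : cs ≠ []) :
    numLeaves (node cs) = ∑ j ∈ Finset.range cs.length, numLeaves (cs.getD j leaf) := by
  rw [numLeaves, card_paths_eq_sum cs.length (finite_isLeafAt _) (by simpa [isLeafAt_nil] using h)
    fun j q hq => (isLeafAt_cons.1 hq).1]
  refine Finset.sum_congr rfl fun j hj => ?_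
  rw [numLeaves]
  refine Nat.card_congr (Equiv.subtypeEquivRight fun q => ?_)
  rw [isLeafAt_cons]
  exact and_iff_right (Finset.mem_range.1 hj)

theorem lex_cons_cons_iff {i j : ℕ} {p q : List ℕ} :
    List.Lex (· < ·) (j :: q) (i :: p) ↔ j < i ∨ j = i ∧ List.Lex (· < ·) q p := by
  constructor
  · intro h
    cases h with
    | cons h => exact Or.inr ⟨rfl, h⟩
    | rel h => exact Or.inl h
  · rintro (h | ⟨rfl, h⟩)
    · exact List.Lex.rel h
    · exact List.Lex.cons h

theorem leavesBefore_nil (t : PTree) : leavesBefore t [] = 0 := by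
  simp [leavesBefore]

theorem leavesBefore_cons {cs : List PTree} {i : ℕ} (hi : i < cs.length) (p : List ℕ) :
    leavesBefore (node cs) (i :: p) =
      ∑ j ∈ Finset.range i, numLeaves (cs.getD j leaf) + leavesBefore (cs.getD i leaf) p := by
  have hne : cs ≠ [] := by rintro rfl; simp at hi
  rw [leavesBefore, card_paths_eq_sum (i + 1) ((finite_isLeafAt (node cs)).subset fun q hq => hq.1)
    (fun h => hne (isLeafAt_nil.1 h.1)), Finset.sum_range_succ]
  · congr 1
    · refine Finset.sum_congr rfl fun j hj => ?_
      rw [numLeaves]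
      refine Nat.card_congr (Equiv.subtypeEquivRight fun q => ?_)
      have hj := Finset.mem_range.1 hj
      rw [isLeafAt_cons, List.cons_prefix_cons]
      simp only [hj.trans hi, true_and, lex_cons_cons_iff, hj, true_or, hj.ne', false_and,
        not_false_iff, and_true]
    · rw [leavesBefore]
      refine Nat.card_congr (Equiv.subtypeEquivRight fun q => ?_)
      rw [isLeafAt_cons, List.cons_prefix_cons]
      simp [hi]
  · intro j q hq
    have := hq.2.1
    rw [lex_cons_cons_iff] at this
    omega

theorem leavesBefore_singleton {cs : List PTree} {i : ℕ} (hi : i < cs.length) :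
    leavesBefore (node cs) [i] = ∑ j ∈ Finset.range i, numLeaves (cs.getD j leaf) := by
  rw [leavesBefore_cons hi, leavesBefore_nil, add_zero]

theorem leavesBefore_add_numLeaves_le {t : PTree} {p : List ℕ} (h : IsVertex t p) :
    leavesBefore t p + numLeaves (subtree! t p) ≤ numLeaves t := by
  induction p generalizing t with
  | nil => rw [leavesBefore_nil, subtree!_nil, zero_add]
  | cons i p ih =>
    obtain ⟨cs⟩ := t
    rcases lt_or_ge i cs.length with hi | hi
    · rw [IsVertex, subtreeAt_node_cons cs i p hi] at h
      rw [leavesBefore_cons hi, subtree!_cons, numLeaves_node (by rintro rfl; simp at hi), add_assoc]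
      calc _ ≤ ∑ j ∈ Finset.range i, numLeaves (cs.getD j leaf) + numLeaves (cs.getD i leaf) :=
            Nat.add_le_add_left (ih h) _
        _ = ∑ j ∈ Finset.range (i + 1), numLeaves (cs.getD j leaf) :=
            (Finset.sum_range_succ _ _).symm
        _ ≤ _ := Finset.sum_le_sum_of_subset (Finset.range_mono hi)
    · simp [IsVertex, subtreeAt_node_cons_of_le cs i p hi] at h

theorem IsSchroder.two_le_length {cs : List PTree} (h : IsSchroder (PTree.node cs)) (hne : cs ≠ []) :
    2 ≤ cs.length := by
  cases h with
  | leaf => exact absurd rfl hne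
  | node _ h _ => exact h

theorem IsSchroder.getD {cs : List PTree} (h : IsSchroder (PTree.node cs)) (i : ℕ) :
    IsSchroder (cs.getD i PTree.leaf) := by
  rcases lt_or_ge i cs.length with hi | hi
  · rw [List.getD_eq_getElem _ _ hi]
    cases h with
    | leaf => simp at hi
    | node _ _ h => exact h _ (List.getElem_mem hi)
  · rw [List.getD_eq_default _ _ hi]; exact IsSchroder.leaf

theorem IsSchroder.one_le_numLeaves {t : PTree} (h : IsSchroder t) : 1 ≤ numLeaves t := by
  induction h with
  | leaf => exact numLeaves_leaf.ge
  | node cs hl h ih =>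
    have h0 : 0 < cs.length := by omega
    rw [numLeaves_node (by rintro rfl; simp at h0)]
    refine le_trans ?_ (Finset.single_le_sum (fun _ _ => Nat.zero_le _) (Finset.mem_range.2 h0))
    rw [List.getD_eq_getElem _ _ h0]
    exact ih _ (List.getElem_mem h0)

theorem sectorIn_nil {t : PTree} {k : ℕ} : SectorIn t [] k ↔ k + 2 ≤ numLeaves t := by
  simp [SectorIn, leavesBefore_nil, subtree!_nil]

theorem leavesBefore_cons_eq_add {cs : List PTree} {i : ℕ} (hi : i < cs.length) (p : List ℕ) :
    leavesBefore (node cs) (i :: p) =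
      leavesBefore (node cs) [i] + leavesBefore (cs.getD i leaf) p := by
  rw [leavesBefore_cons hi, leavesBefore_singleton hi]

theorem sectorIn_cons {cs : List PTree} {i k : ℕ} {p : List ℕ} (hi : i < cs.length) :
    SectorIn (node cs) (i :: p) k ↔ leavesBefore (node cs) [i] ≤ k ∧
      SectorIn (cs.getD i leaf) p (k - leavesBefore (node cs) [i]) := by
  rw [SectorIn, SectorIn, subtree!_cons, leavesBefore_cons_eq_add hi]
  omega

theorem IsInternalAt.lt_length {cs : List PTree} {i : ℕ} {p : List ℕ}
    (h : IsInternalAt (node cs) (i :: p)) : i < cs.length := by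
  by_contra hi
  rw [isInternalAt_cons, List.getD_eq_default _ _ (not_lt.1 hi)] at h
  exact not_isInternalAt_leaf p h

theorem SectorIn.numLeaves {t : PTree} {p : List ℕ} {k : ℕ} (h : SectorIn t p k)
    (hp : IsVertex t p) : k + 2 ≤ t.numLeaves :=
  h.2.trans (leavesBefore_add_numLeaves_le hp)

theorem SectorIn.head {cs : List PTree} {i k : ℕ} {p : List ℕ}
    (hp : IsInternalAt (node cs) (i :: p)) (h : SectorIn (node cs) (i :: p) k) :
    SectorIn (node cs) [i] k := by
  have hi := hp.lt_length
  rw [sectorIn_cons hi] at h ⊢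
  exact ⟨h.1, sectorIn_nil.2 (h.2.numLeaves (isInternalAt_cons.1 hp).isVertex)⟩

theorem ownsSector_cons {cs : List PTree} {i k : ℕ} {p : List ℕ} (hi : i < cs.length) :
    OwnsSector (node cs) (i :: p) k ↔ leavesBefore (node cs) [i] ≤ k ∧
      OwnsSector (cs.getD i leaf) p (k - leavesBefore (node cs) [i]) := by
  rw [OwnsSector, OwnsSector, isInternalAt_cons, sectorIn_cons hi]
  constructor
  · rintro ⟨h1, ⟨h2, h3⟩, h4⟩
    refine ⟨h2, h1, h3, fun w hw hpw hne hs => ?_⟩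
    exact h4 (i :: w) (isInternalAt_cons.2 hw) (List.cons_prefix_cons.2 ⟨rfl, hpw⟩)
      (by simpa using hne) ((sectorIn_cons hi).2 ⟨h2, hs⟩)
  · rintro ⟨h2, h1, h3, h4⟩
    refine ⟨h1, ⟨h2, h3⟩, fun w hw hpw hne hs => ?_⟩
    cases w with
    | nil => simp at hpw
    | cons j w =>
      obtain ⟨rfl, hpw'⟩ := List.cons_prefix_cons.1 hpw
      exact h4 w (isInternalAt_cons.1 hw) hpw' (by simpa using hne) ((sectorIn_cons hi).1 hs).2

theorem OwnsSector.lt_numSectors {t : PTree} {p : List ℕ} {k : ℕ} (h : OwnsSector t p k) :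
    k < numSectors t := by
  have := h.2.1.numLeaves h.1.isVertex
  rw [numSectors]
  omega

open Classical in
/-- The subword of `w` carried by the sectors owned by the vertex `v` of `t`. -/
noncomputable def blockWord {A : Type*} [Zero A] (t : PTree) (v : List ℕ) (w : List A) : List A :=
  ((List.range w.length).filter fun i => OwnsSector t v i).map fun i => w.getD i 0

/-- The subword of `w` decorating the `i`-th child of the root of `node cs`. -/
noncomputable def kidWord {A : Type*} (cs : List PTree) (w : List A) (i : ℕ) : List A :=
  (w.drop (leavesBefore (node cs) [i])).take (numSectors (cs.getD i leaf))

theorem leavesBefore_singleton_add_le {cs : List PTree} {i : ℕ} (hi : i < cs.length) :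
    leavesBefore (node cs) [i] + numLeaves (cs.getD i leaf) ≤ numLeaves (node cs) := by
  have h : IsVertex (node cs) [i] := by
    rw [IsVertex, subtreeAt_node_cons cs i [] hi]; rfl
  simpa [subtree!_cons, subtree!_nil] using leavesBefore_add_numLeaves_le h

theorem leavesBefore_singleton_add_numSectors_le {cs : List PTree} (hs : IsSchroder (node cs))
    {i : ℕ} (hi : i < cs.length) :
    leavesBefore (node cs) [i] + numSectors (cs.getD i leaf) ≤ numSectors (node cs) := by
  have h1 := leavesBefore_singleton_add_le hi
  have h2 := (hs.getD i).one_le_numLeaves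
  rw [numSectors, numSectors]
  omega

theorem length_kidWord {A : Type*} {cs : List PTree} (hs : IsSchroder (node cs)) {w : List A}
    (hw : w.length = numSectors (node cs)) {i : ℕ} (hi : i < cs.length) :
    (kidWord cs w i).length = numSectors (cs.getD i leaf) := by
  have := leavesBefore_singleton_add_numSectors_le hs hi
  rw [kidWord, List.length_take, List.length_drop]
  omega

theorem blockWord_cons {A : Type*} [Zero A] {cs : List PTree} (hs : IsSchroder (node cs))
    {w : List A} (hw : w.length = numSectors (node cs)) {i : ℕ} (hi : i < cs.length)
    (p : List ℕ) :
    blockWord (node cs) (i :: p) w = blockWord (cs.getD i leaf) p (kidWord cs w i) := by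
  classical
  have hle := leavesBefore_singleton_add_numSectors_le hs hi
  obtain ⟨r, hr⟩ := Nat.exists_eq_add_of_le hle
  rw [← hw] at hr
  rw [blockWord, blockWord, length_kidWord hs hw hi, hr, List.range_add, List.range_add]
  simp only [List.filter_append, List.map_append, List.filter_map, List.map_map]
  rw [List.filter_eq_nil_iff.2, List.filter_eq_nil_iff (l := List.range r) |>.2]
  · simp only [List.map_nil, List.nil_append, List.append_nil]
    rw [List.filter_congr (q := fun j => decide (OwnsSector (cs.getD i leaf) p j))]
    · refine List.map_congr_left fun j hj => ?_
      have hj : j < numSectors (cs.getD i leaf) := by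
        simpa using (List.mem_filter.1 hj).1
      rw [Function.comp, kidWord, List.getD_eq_getElem?_getD (l := List.take _ _),
        List.getElem?_take, if_pos hj, List.getElem?_drop, List.getD_eq_getElem?_getD]
    · intro j _
      simp [ownsSector_cons hi]
  · intro j _
    simp only [Function.comp, ownsSector_cons hi, decide_eq_true_eq, not_and]
    intro _ h
    have := h.lt_numSectors
    omega
  · intro j hj
    have hj := List.mem_range.1 hj
    simp only [ownsSector_cons hi, decide_eq_true_eq, not_and]
    intro h
    omega

theorem internalFinset_leaf : internalFinset leaf = ∅ := by
  ext p; simp [mem_internalFinset, not_isInternalAt_leaf]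

theorem internalFinset_node {cs : List PTree} (hne : cs ≠ []) :
    internalFinset (node cs) = insert [] ((Finset.range cs.length).biUnion fun i =>
      (internalFinset (cs.getD i leaf)).image fun p => i :: p) := by
  ext p
  simp only [mem_internalFinset, Finset.mem_insert, Finset.mem_biUnion, Finset.mem_image,
    Finset.mem_range]
  cases p with
  | nil => simpa [isInternalAt_nil] using hne
  | cons i p =>
    constructor
    · intro h
      exact Or.inr ⟨i, h.lt_length, p, isInternalAt_cons.1 h, rfl⟩
    · rintro (h | ⟨j, -, q, h, heq⟩)
      · simp at h
      · obtain ⟨rfl, rfl⟩ := List.cons.inj heq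
        exact isInternalAt_cons.2 h

theorem prod_internalFinset_node {M : Type*} [CommMonoid M] {cs : List PTree} (hne : cs ≠ [])
    (f : List ℕ → M) :
    ∏ v ∈ internalFinset (node cs), f v =
      f [] * ∏ i ∈ Finset.range cs.length, ∏ p ∈ internalFinset (cs.getD i leaf), f (i :: p) := by
  rw [internalFinset_node hne, Finset.prod_insert (by simp), Finset.prod_biUnion]
  · congr 1
    refine Finset.prod_congr rfl fun i _ => ?_
    rw [Finset.prod_image (by intro a _ b _ h; simpa using h)]
  · intro i _ j _ hij
    simp only [Function.onFun, Finset.disjoint_left, Finset.mem_image]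
    rintro _ ⟨p, -, rfl⟩ ⟨q, -, h⟩
    exact hij (List.cons.inj h).1.symm

theorem phiPi_eq_prod {A : Type*} [Ring A] (φ : A → ℂ) (t : PTree) (w : List A) :
    phiPi φ t w = ∏ v ∈ internalFinset t, φ (blockWord t v w).prod := by
  rw [phiPi, ← finprod_mem_coe_finset]
  have : {v : List ℕ | IsInternalAt t v} = (internalFinset t : Set (List ℕ)) := by
    ext v; simp [mem_internalFinset]
  rw [this]
  rfl

theorem phiPi_leaf {A : Type*} [Ring A] (φ : A → ℂ) (w : List A) : phiPi φ leaf w = 1 := by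
  rw [phiPi_eq_prod, internalFinset_leaf, Finset.prod_empty]

theorem phiPi_node {A : Type*} [Ring A] (φ : A → ℂ) {cs : List PTree}
    (hs : IsSchroder (node cs)) (hne : cs ≠ []) {w : List A}
    (hw : w.length = numSectors (node cs)) :
    phiPi φ (node cs) w = φ (blockWord (node cs) [] w).prod *
      ∏ i ∈ Finset.range cs.length, phiPi φ (cs.getD i leaf) (kidWord cs w i) := by
  rw [phiPi_eq_prod, prod_internalFinset_node hne]
  congr 1
  refine Finset.prod_congr rfl fun i hi => ?_
  rw [phiPi_eq_prod]
  refine Finset.prod_congr rfl fun p _ => ?_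
  rw [blockWord_cons hs hw (Finset.mem_range.1 hi)]


/-- The cut at all internal children of the root. -/
noncomputable def kidCut (cs : List PTree) : Finset (List ℕ) :=
  open Classical in
  ((Finset.range cs.length).filter fun i => cs.getD i leaf ≠ leaf).image fun i => [i]

theorem singleton_mem_kidCut {cs : List PTree} {i : ℕ} :
    [i] ∈ kidCut cs ↔ cs.getD i leaf ≠ leaf := by
  simp only [kidCut, Finset.mem_image, Finset.mem_filter, Finset.mem_range, List.cons.injEq,
    and_true, exists_eq_right, and_iff_right_iff_imp]
  intro h
  by_contra hi
  exact h (List.getD_eq_default _ _ (not_lt.1 hi))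

theorem exists_eq_singleton_of_mem_kidCut {cs : List PTree} {v : List ℕ} (h : v ∈ kidCut cs) :
    ∃ i < cs.length, v = [i] := by
  simp only [kidCut, Finset.mem_image, Finset.mem_filter, Finset.mem_range] at h
  obtain ⟨i, hi, rfl⟩ := h
  exact ⟨i, hi.1, rfl⟩

theorem mem_cutsFinset {t : PTree} {c : Finset (List ℕ)} :
    c ∈ cutsFinset t ↔ (∀ v ∈ c, IsInternalAt t v) ∧ ∀ v ∈ c, ∀ w ∈ c, v ≠ w → ¬ v <+: w := by
  simp [cutsFinset, Finset.subset_iff, mem_internalFinset]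

theorem singleton_nil_mem_cutsFinset {cs : List PTree} (hne : cs ≠ []) :
    {[]} ∈ cutsFinset (node cs) := by
  simp [mem_cutsFinset, isInternalAt_nil, hne]

theorem kidCut_mem_cutsFinset (cs : List PTree) : kidCut cs ∈ cutsFinset (node cs) := by
  rw [mem_cutsFinset]
  constructor
  · intro v hv
    obtain ⟨i, -, rfl⟩ := exists_eq_singleton_of_mem_kidCut hv
    exact isInternalAt_cons.2 (isInternalAt_nil_iff_ne_leaf.2 (singleton_mem_kidCut.1 hv))
  · intro v hv w hw hvw h
    obtain ⟨i, -, rfl⟩ := exists_eq_singleton_of_mem_kidCut hv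
    obtain ⟨j, -, rfl⟩ := exists_eq_singleton_of_mem_kidCut hw
    simp [List.cons_prefix_cons] at h
    exact hvw (by rw [h])

theorem eq_singleton_nil_of_nil_mem {t : PTree} {c : Finset (List ℕ)} (hc : c ∈ cutsFinset t)
    (h : [] ∈ c) : c = {[]} := by
  ext v
  rw [Finset.mem_singleton]
  constructor
  · intro hv
    by_contra hne
    exact (mem_cutsFinset.1 hc).2 [] h v hv (Ne.symm hne) (List.nil_prefix)
  · rintro rfl; exact h

theorem sortCut_perm (t : PTree) (c : Finset (List ℕ)) : (sortCut t c).Perm c.toList :=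
  List.mergeSort_perm _ _

theorem mem_sortCut {t : PTree} {c : Finset (List ℕ)} {v : List ℕ} : v ∈ sortCut t c ↔ v ∈ c := by
  rw [(sortCut_perm t c).mem_iff, Finset.mem_toList]

theorem sortCut_singleton (t : PTree) (v : List ℕ) : sortCut t {v} = [v] := by
  simp [sortCut]

theorem replaceLeaf_eq_leaf_iff {p : List ℕ} {t : PTree} :
    replaceLeaf p t = leaf ↔ t = leaf ∨ p = [] := by
  obtain ⟨cs⟩ := t
  cases p <;> simp [replaceLeaf, leaf]

theorem getD_set_eq_leaf_iff {cs : List PTree} {i j : ℕ} {p : List ℕ} :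
    (cs.set j (replaceLeaf p (cs.getD j leaf))).getD i leaf = leaf ↔
      cs.getD i leaf = leaf ∨ [i] = j :: p := by
  rcases eq_or_ne j i with rfl | hij
  · rcases lt_or_ge j cs.length with hj | hj
    · rw [List.getD_eq_getElem?_getD, List.getElem?_set_self hj, Option.getD_some,
        replaceLeaf_eq_leaf_iff]
      simp [eq_comm]
    · rw [List.getD_eq_default _ _ (by simpa using hj), List.getD_eq_default _ _ hj]
      simp
  · rw [List.getD_eq_getElem?_getD, List.getElem?_set_ne hij, ← List.getD_eq_getElem?_getD]
    simp [hij.symm]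

theorem foldl_replaceLeaf (L : List (List ℕ)) (hL : [] ∉ L) (cs : List PTree) :
    ∃ cs' : List PTree, L.foldl (fun s v => replaceLeaf v s) (node cs) = node cs' ∧
      cs'.length = cs.length ∧
      ∀ i, cs'.getD i leaf = leaf ↔ cs.getD i leaf = leaf ∨ [i] ∈ L := by
  induction L generalizing cs with
  | nil => exact ⟨cs, rfl, rfl, by simp⟩
  | cons v L ih =>
    rw [List.mem_cons, not_or] at hL
    cases v with
    | nil => exact absurd rfl hL.1
    | cons j p =>
      obtain ⟨cs', h1, h2, h3⟩ := ih hL.2 (cs.set j (replaceLeaf p (cs.getD j leaf)))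
      refine ⟨cs', h1, by simpa using h2, fun i => ?_⟩
      rw [h3, getD_set_eq_leaf_iff, List.mem_cons, or_assoc]

theorem isCorolla_node_iff {cs : List PTree} (h : 2 ≤ cs.length) :
    IsCorolla (node cs) ↔ ∀ i, cs.getD i leaf = leaf := by
  constructor
  · rintro ⟨m, -, h⟩ i
    rw [corolla, node.injEq] at h
    subst h
    rcases lt_or_ge i m with hi | hi
    · rw [List.getD_eq_getElem _ _ (by simpa using hi), List.getElem_replicate]
    · rw [List.getD_eq_default _ _ (by simpa using hi)]
  · intro hall
    refine ⟨cs.length, h, ?_⟩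
    rw [corolla, node.injEq, List.eq_replicate_iff]
    refine ⟨rfl, fun b hb => ?_⟩
    obtain ⟨i, hi, rfl⟩ := List.getElem_of_mem hb
    rw [← hall i, List.getD_eq_getElem _ _ hi]

theorem trunkTree_singleton_nil (t : PTree) : trunkTree t {[]} = leaf := by
  rw [trunkTree, sortCut_singleton]
  rfl

theorem trunkTree_eq_leaf_iff {cs : List PTree} (hne : cs ≠ []) {c : Finset (List ℕ)}
    (hc : c ∈ cutsFinset (node cs)) : trunkTree (node cs) c = leaf ↔ c = {[]} := by
  constructor
  · intro h
    refine eq_singleton_nil_of_nil_mem hc ?_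
    by_contra h0
    obtain ⟨cs', h1, h2, -⟩ := foldl_replaceLeaf (sortCut (node cs) c)
      (fun h => h0 (mem_sortCut.1 h)) cs
    rw [trunkTree, h1, node.injEq] at h
    subst h
    exact hne (List.length_eq_zero_iff.1 h2.symm)
  · rintro rfl; exact trunkTree_singleton_nil _

theorem isCorolla_trunkTree_iff {cs : List PTree} (hlen : 2 ≤ cs.length) {c : Finset (List ℕ)}
    (hc : c ∈ cutsFinset (node cs)) : IsCorolla (trunkTree (node cs) c) ↔ c = kidCut cs := by
  by_cases h0 : [] ∈ c
  · rw [eq_singleton_nil_of_nil_mem hc h0, trunkTree_singleton_nil]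
    refine iff_of_false ?_ fun h => ?_
    · rintro ⟨m, hm, h⟩
      rw [corolla, node.injEq, eq_comm, List.replicate_eq_nil_iff] at h
      omega
    · obtain ⟨i, -, h⟩ := exists_eq_singleton_of_mem_kidCut (h ▸ Finset.mem_singleton_self [])
      simp at h
  · obtain ⟨cs', h1, h2, h3⟩ := foldl_replaceLeaf (sortCut (node cs) c)
      (fun h => h0 (mem_sortCut.1 h)) cs
    rw [trunkTree, h1, isCorolla_node_iff (h2 ▸ hlen)]
    simp only [h3, mem_sortCut]
    constructor
    · intro h
      ext v
      constructor
      · intro hv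
        have hint := (mem_cutsFinset.1 hc).1 v hv
        cases v with
        | nil => exact absurd hv h0
        | cons i p =>
          have hne := (isInternalAt_cons.1 hint).ne_leaf
          have hp : p = [] := by
            by_contra hp
            exact (mem_cutsFinset.1 hc).2 [i] ((h i).resolve_left hne) _ hv (by simpa using Ne.symm hp)
              (by simp [List.cons_prefix_cons])
          subst hp
          exact singleton_mem_kidCut.2 hne
      · intro hv
        obtain ⟨i, -, rfl⟩ := exists_eq_singleton_of_mem_kidCut hv
        exact (h i).resolve_left (singleton_mem_kidCut.1 hv)
    · rintro rfl i
      rw [singleton_mem_kidCut]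
      exact em _

theorem removedIdx_kidCut_iff {cs : List PTree} (hs : IsSchroder (node cs)) (hne : cs ≠ [])
    {k : ℕ} (hk : k < numSectors (node cs)) :
    ¬ RemovedIdx (node cs) (kidCut cs) k ↔ OwnsSector (node cs) [] k := by
  have hrem (i : ℕ) : (leavesBefore (node cs) [i] ≤ k ∧
      k < leavesBefore (node cs) [i] + numSectors (subtree! (node cs) [i])) ↔
      SectorIn (node cs) [i] k := by
    have := (hs.getD i).one_le_numLeaves
    rw [SectorIn, subtree!_cons, subtree!_nil, numSectors]
    omega
  have hroot : SectorIn (node cs) [] k := by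
    rw [numSectors] at hk
    rw [sectorIn_nil]
    omega
  constructor
  · intro h
    refine ⟨isInternalAt_nil.2 hne, hroot, fun w hw _ hw0 hsw => h ?_⟩
    cases w with
    | nil => exact absurd rfl hw0
    | cons i p =>
      exact ⟨[i], singleton_mem_kidCut.2 (isInternalAt_cons.1 hw).ne_leaf,
        (hrem i).2 (hsw.head hw)⟩
  · rintro ⟨-, -, h⟩ ⟨v, hv, hvk⟩
    obtain ⟨i, -, rfl⟩ := exists_eq_singleton_of_mem_kidCut hv
    exact h [i] ((mem_cutsFinset.1 (kidCut_mem_cutsFinset cs)).1 _ hv) (List.nil_prefix)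
      (by simp) ((hrem i).1 hvk)

theorem trunkWord_kidCut {A : Type*} [Zero A] {cs : List PTree} (hs : IsSchroder (node cs))
    (hne : cs ≠ []) {w : List A} (hw : w.length = numSectors (node cs)) :
    trunkWord (node cs) (kidCut cs) w = blockWord (node cs) [] w := by
  rw [trunkWord, blockWord]
  congr 1
  refine List.filter_congr fun k hk => ?_
  rw [List.mem_range, hw] at hk
  exact decide_eq_decide.2 (removedIdx_kidCut_iff hs hne hk)

theorem prunePart_singleton_nil {A : Type*} {t : PTree} {w : List A}
    (hw : w.length = numSectors t) : prunePart (t, w) {[]} = [(t, w)] := by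
  simp [prunePart, sortCut_singleton, subtree!_nil, leavesBefore_nil, ← hw]

theorem goodForest_prunePart_kidCut {A : Type*} {cs : List PTree} (hs : IsSchroder (node cs))
    {w : List A} (hw : w.length = numSectors (node cs)) :
    GoodForest (prunePart (node cs, w) (kidCut cs)) := by
  intro d hd
  obtain ⟨v, hv, rfl⟩ := List.mem_map.1 hd
  rw [mem_sortCut] at hv
  obtain ⟨i, hi, rfl⟩ := exists_eq_singleton_of_mem_kidCut hv
  rw [subtree!_cons, subtree!_nil]
  exact ⟨hs.getD i, singleton_mem_kidCut.1 hv, length_kidWord hs hw hi⟩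

theorem prod_prunePart_kidCut {A M : Type*} [CommMonoid M] (cs : List PTree) (w : List A)
    (f : PTree × List A → M) (hf : ∀ u, f (leaf, u) = 1) :
    ((prunePart (node cs, w) (kidCut cs)).map f).prod =
      ∏ i ∈ Finset.range cs.length, f (cs.getD i leaf, kidWord cs w i) := by
  classical
  rw [prunePart, List.map_map, ((sortCut_perm _ _).map _).prod_eq, Finset.prod_map_toList, kidCut,
    Finset.prod_image (by intro a _ b _ h; simpa using h), Finset.prod_filter]
  refine Finset.prod_congr rfl fun i _ => ?_
  simp only [Function.comp, subtree!_cons, subtree!_nil, kidWord]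
  split_ifs with h
  · rfl
  · rw [not_not.1 h, hf]

section Convolution

variable {A : Type*}

theorem convD_sub_left [Zero A] (f f' g : DForest A → ℂ) (F : DForest A) :
    convD (fun P => f P - f' P) g F = convD f g F - convD f' g F := by
  simp only [convD, sub_mul]
  induction forestSplits F with
  | nil => simp
  | cons x l ih =>
    simp only [List.map_cons, List.sum_cons, ih]
    ring

theorem convD_sum_right [Zero A] (f : DForest A → ℂ) {ι : Type*} (s : Finset ι) (a : ι → ℂ)
    (g : ι → DForest A → ℂ) (F : DForest A) :
    convD f (fun P => ∑ j ∈ s, a j * g j P) F = ∑ j ∈ s, a j * convD f (g j) F := by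
  simp only [convD, Finset.mul_sum, ← List.sum_map_mul_left]
  induction forestSplits F with
  | nil => simp
  | cons x l ih =>
    simp only [List.map_cons, List.sum_cons, ih, Finset.sum_add_distrib]
    congr 1
    exact Finset.sum_congr rfl fun j _ => by ring

theorem convD_mul_right [Zero A] (f g : DForest A → ℂ) (a : ℂ) (F : DForest A) :
    convD f (fun P => a * g P) F = a * convD f g F := by
  simpa using convD_sum_right f {()} (fun _ => a) (fun _ => g) F

theorem convD_cons [Zero A] {f : DForest A → ℂ} (hf : ∀ P Q, f (P ++ Q) = f P * f Q)
    (g : DForest A → ℂ) (d : PTree × List A) (F : DForest A) :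
    convD f g (d :: F) = ∑ c ∈ cutsFinset d.1,
      f (trunkPart d c) * convD f (fun P => g (prunePart d c ++ P)) F := by
  rw [convD, forestSplits, ← Finset.sum_map_toList]
  induction (cutsFinset d.1).toList with
  | nil => simp
  | cons c l ih =>
    rw [List.flatMap_cons, List.map_append, List.sum_append, ih, List.map_cons, List.sum_cons]
    congr 1
    rw [convD, ← List.sum_map_mul_left, List.map_map]
    simp only [Function.comp_def, hf, mul_assoc]

theorem epsD_append (P Q : DForest A) : epsD (P ++ Q) = epsD P * epsD Q := by
  by_cases hP : P = [] <;> by_cases hQ : Q = [] <;> simp [epsD, hP, hQ]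

theorem charD_append [Ring A] (φ : A → ℂ) (P Q : DForest A) :
    charD φ (P ++ Q) = charD φ P * charD φ Q := by
  simp [charD]

theorem convD_epsD [Zero A] (g : DForest A → ℂ) {F : DForest A} (hF : GoodForest F) :
    convD epsD g F = g F := by
  induction F generalizing g with
  | nil => simp [convD, forestSplits, epsD]
  | cons d F ih =>
    obtain ⟨⟨cs⟩, w⟩ := d
    obtain ⟨-, hne, hw⟩ := hF _ List.mem_cons_self
    have hne : cs ≠ [] := fun h => hne (by rw [h])
    rw [convD_cons epsD_append, Finset.sum_eq_single {[]}]
    · rw [ih _ fun d hd => hF d (List.mem_cons_of_mem _ hd), trunkPart, prunePart_singleton_nil hw,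
        if_pos (trunkTree_singleton_nil _)]
      simp [epsD]
    · intro c hc hne'
      rw [trunkPart, if_neg (mt (trunkTree_eq_leaf_iff hne hc).1 hne')]
      simp [epsD]
    · exact fun h => absurd (singleton_nil_mem_cutsFinset hne) h

/-- The forest of decorated subtrees at the internal children of the root. -/
noncomputable def kids (d : PTree × List A) : DForest A :=
  match d with
  | (node cs, w) => prunePart (node cs, w) (kidCut cs)

theorem goodForest_kids {d : PTree × List A} (hd : GoodTree d) : GoodForest (kids d) := by
  obtain ⟨⟨cs⟩, w⟩ := d
  exact goodForest_prunePart_kidCut hd.1 hd.2.2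

theorem convD_charD_cons [Ring A] (φ : A → ℂ) (g : DForest A → ℂ) {d : PTree × List A}
    (hd : GoodTree d) (F : DForest A) :
    convD (charD φ) g (d :: F) = convD (charD φ) (fun P => g (d :: P)) F +
      φ (blockWord d.1 [] d.2).prod * convD (charD φ) (fun P => g (kids d ++ P)) F := by
  obtain ⟨⟨cs⟩, w⟩ := d
  obtain ⟨hs, hne, hw⟩ := hd
  have hne : cs ≠ [] := fun h => hne (by rw [h])
  have hlen := hs.two_le_length hne
  have hk : {[]} ≠ kidCut cs := by
    intro h
    obtain ⟨i, -, h⟩ := exists_eq_singleton_of_mem_kidCut (h ▸ Finset.mem_singleton_self [])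
    simp at h
  rw [convD_cons (charD_append φ), Finset.sum_eq_add_of_mem {[]} (kidCut cs)
    (singleton_nil_mem_cutsFinset hne) (kidCut_mem_cutsFinset cs) hk]
  · congr 1
    · rw [trunkPart, if_pos (trunkTree_singleton_nil _), prunePart_singleton_nil hw]
      simp [charD]
    · rw [trunkPart, if_neg (mt (trunkTree_eq_leaf_iff hne (kidCut_mem_cutsFinset cs)).1 hk.symm),
        trunkWord_kidCut hs hne hw]
      simp only [charD, List.map_cons, List.map_nil, List.prod_cons, List.prod_nil, mul_one,
        if_pos ((isCorolla_trunkTree_iff hlen (kidCut_mem_cutsFinset cs)).2 rfl)]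
      rfl
  · rintro c hc ⟨h1, h2⟩
    rw [trunkPart, if_neg (mt (trunkTree_eq_leaf_iff hne hc).1 h1)]
    simp [charD, mt (isCorolla_trunkTree_iff hlen hc).1 h2]

theorem convD_charD_congr [Ring A] (φ : A → ℂ) {g g' : DForest A → ℂ}
    (hg : ∀ P, GoodForest P → g P = g' P) {F : DForest A} (hF : GoodForest F) :
    convD (charD φ) g F = convD (charD φ) g' F := by
  induction F generalizing g g' with
  | nil => simp [convD, forestSplits, hg [] hF]
  | cons d F ih =>
    have hd := hF d List.mem_cons_self
    have hF' : GoodForest F := fun e he => hF e (List.mem_cons_of_mem _ he)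
    rw [convD_charD_cons φ g hd, convD_charD_cons φ g' hd]
    congr 1
    · exact ih (fun P hP => hg _ (List.forall_mem_cons.2 ⟨hd, hP⟩)) hF'
    · congr 1
      exact ih (fun P hP => hg _ (List.forall_mem_append.2 ⟨goodForest_kids hd, hP⟩)) hF'

theorem convD_charD_prod [Ring A] (φ : A → ℂ) (h : PTree × List A → ℂ) {F : DForest A}
    (hF : GoodForest F) :
    convD (charD φ) (fun P => (P.map h).prod) F =
      (F.map fun d => h d + φ (blockWord d.1 [] d.2).prod * ((kids d).map h).prod).prod := by
  induction F with
  | nil => simp [convD, forestSplits, charD]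
  | cons d F ih =>
    rw [convD_charD_cons φ _ (hF d List.mem_cons_self)]
    simp only [List.map_cons, List.prod_cons, List.map_append, List.prod_append, convD_mul_right]
    rw [ih fun e he => hF e (List.mem_cons_of_mem _ he)]
    ring

end Convolution

/-- Strictly order-preserving maps from the internal vertices of `t` to `Fin k`. -/
abbrev StrictLabelling (t : PTree) (k : ℕ) : Type :=
  {f : {p : List ℕ // IsInternalAt t p} → Fin k // ∀ v w, v.1 <+: w.1 → v ≠ w → f v < f w}

/-- The number of strictly order-preserving maps from the internal vertices of `t` to `Fin k`. -/
noncomputable def strictCount (t : PTree) (k : ℕ) : ℕ := Nat.card (StrictLabelling t k)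

theorem strictCount_leaf (k : ℕ) : strictCount leaf k = 1 := by
  have : IsEmpty {p : List ℕ // IsInternalAt leaf p} := ⟨fun p => not_isInternalAt_leaf _ p.2⟩
  rw [strictCount, Nat.card_eq_one_iff_unique]
  exact ⟨inferInstance, ⟨⟨isEmptyElim, fun v => isEmptyElim v⟩⟩⟩

theorem strictCount_zero {t : PTree} (h : t ≠ leaf) : strictCount t 0 = 0 := by
  have : IsEmpty (StrictLabelling t 0) :=
    ⟨fun f => (f.1 ⟨[], isInternalAt_nil_iff_ne_leaf.2 h⟩).elim0⟩
  rw [strictCount, Nat.card_of_isEmpty]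

/-- Shift every label by one. -/
def StrictLabelling.shift {t : PTree} {k : ℕ} (g : StrictLabelling t k) :
    StrictLabelling t (k + 1) :=
  ⟨fun v => (g.1 v).succ, fun v w h hne => Fin.succ_lt_succ_iff.2 (g.2 v w h hne)⟩

/-- Label the root by zero and shift labellings of the children by one. -/
def StrictLabelling.join {cs : List PTree} {k : ℕ}
    (g : ∀ i : Fin cs.length, StrictLabelling (cs.getD i leaf) k) :
    StrictLabelling (node cs) (k + 1) :=
  ⟨fun v => match v with
    | ⟨[], _⟩ => 0
    | ⟨i :: p, h⟩ => ((g ⟨i, h.lt_length⟩).1 ⟨p, isInternalAt_cons.1 h⟩).succ, by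
    rintro ⟨_ | ⟨i, p⟩, hv⟩ ⟨_ | ⟨j, q⟩, hw⟩ h hne
    · exact absurd rfl hne
    · exact Fin.succ_pos _
    · simp at h
    · obtain ⟨rfl, h'⟩ := List.cons_prefix_cons.1 h
      refine Fin.succ_lt_succ_iff.2 ((g _).2 _ _ h' ?_)
      simpa using hne⟩

theorem strictCount_node_succ {cs : List PTree} (hne : cs ≠ []) (k : ℕ) :
    strictCount (node cs) (k + 1) =
      strictCount (node cs) k + ∏ i ∈ Finset.range cs.length, strictCount (cs.getD i leaf) k := by
  have hroot : IsInternalAt (node cs) [] := isInternalAt_nil.2 hne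
  rw [Finset.prod_range (fun i => strictCount (cs.getD i leaf) k)]
  simp only [strictCount]
  rw [← Nat.card_pi, ← Nat.card_sum]
  symm
  refine Nat.card_eq_of_bijective (Sum.elim StrictLabelling.shift StrictLabelling.join) ⟨?_, ?_⟩
  · rintro (g | g) (g' | g') h
    · congr 1
      ext v : 2
      exact Fin.succ_injective _ (congrFun (congrArg Subtype.val h) v)
    · exact absurd (congrFun (congrArg Subtype.val h) ⟨[], hroot⟩) (Fin.succ_ne_zero _)
    · exact absurd (congrFun (congrArg Subtype.val h) ⟨[], hroot⟩).symm (Fin.succ_ne_zero _)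
    · congr 1
      funext i
      ext v : 2
      exact Fin.succ_injective _ (congrFun (congrArg Subtype.val h)
        ⟨(i : ℕ) :: v.1, isInternalAt_cons.2 v.2⟩)
  · intro f
    have hpos (v) (hv : v ≠ ⟨[], hroot⟩) : f.1 v ≠ 0 :=
      ((Fin.zero_le _).trans_lt (f.2 ⟨[], hroot⟩ v List.nil_prefix hv.symm)).ne'
    by_cases h0 : f.1 ⟨[], hroot⟩ = 0
    · refine ⟨Sum.inr fun i => ⟨fun v => (f.1 ⟨(i : ℕ) :: v.1, isInternalAt_cons.2 v.2⟩).pred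
        (hpos _ (by simp)), fun v w h hvw => ?_⟩, ?_⟩
      · rw [Fin.pred_lt_pred_iff]
        exact f.2 _ _ (List.cons_prefix_cons.2 ⟨rfl, h⟩) (by simpa [Subtype.ext_iff] using hvw)
      · ext v : 2
        rcases v with ⟨_ | ⟨i, p⟩, hv⟩
        · exact h0.symm
        · exact Fin.succ_pred _ (hpos _ (by simp))
    · have hpos' (v) : f.1 v ≠ 0 := by
        by_cases hv : v = ⟨[], hroot⟩
        · rwa [hv]
        · exact hpos v hv
      refine ⟨Sum.inl ⟨fun v => (f.1 v).pred (hpos' v), fun v w h hvw => ?_⟩, ?_⟩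
      · rw [Fin.pred_lt_pred_iff]
        exact f.2 _ _ h hvw
      · ext v : 2
        exact Fin.succ_pred _ (hpos' v)

/-- Surjective strict labellings, after composition with an increasing injection. -/
theorem strictCount_eq_sum_choose (t : PTree) (k : ℕ) :
    strictCount t k = ∑ j ∈ Finset.range (k + 1), k.choose j * omegaSkK t j := by
  classical
  have : Fintype {p // IsInternalAt t p} := Fintype.ofFinite _
  have key : strictCount t k = ∑ S : Finset (Fin k), omegaSkK t S.card := by
    simp only [strictCount, omegaSkK]
    rw [← Nat.card_sigma]
    symm
    refine Nat.card_eq_of_bijective (fun x => ⟨fun v => x.1.orderEmbOfFin rfl (x.2.1 v),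
      fun v w h hne => (x.1.orderEmbOfFin rfl).strictMono (x.2.2.2 v w h hne)⟩) ⟨?_, ?_⟩
    · have himg (x : Σ S : Finset (Fin k), {f : {p // IsInternalAt t p} → Fin S.card //
          Function.Surjective f ∧ ∀ v w, v.1 <+: w.1 → v ≠ w → f v < f w}) :
          Set.range (fun v => x.1.orderEmbOfFin rfl (x.2.1 v)) = x.1 := by
        rw [← Finset.range_orderEmbOfFin x.1 rfl]
        exact x.2.2.1.range_comp (x.1.orderEmbOfFin rfl)
      rintro ⟨S, f⟩ ⟨S', f'⟩ h
      have h' := congrArg Subtype.val h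
      have hS : S = S' := by
        have h1 := himg ⟨S, f⟩
        have h2 := himg ⟨S', f'⟩
        rw [← Finset.coe_inj, ← h1, ← h2]
        exact congrArg Set.range h'
      subst hS
      congr 1
      ext v : 2
      exact (S.orderEmbOfFin rfl).injective (congrFun h' v)
    · intro f
      have hmem (v) : f.1 v ∈ Finset.univ.image f.1 := Finset.mem_image_of_mem _ (Finset.mem_univ v)
      refine ⟨⟨Finset.univ.image f.1,
        fun v => ((Finset.univ.image f.1).orderIsoOfFin rfl).symm ⟨f.1 v, hmem v⟩, ?_, ?_⟩, ?_⟩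
      · intro i
        obtain ⟨y, hy⟩ := ((Finset.univ.image f.1).orderIsoOfFin rfl).symm.surjective i
        obtain ⟨y, hy'⟩ := y
        obtain ⟨v, -, rfl⟩ := Finset.mem_image.1 hy'
        exact ⟨v, hy⟩
      · intro v w h hne
        rw [OrderIso.lt_iff_lt]
        exact f.2 v w h hne
      · ext v : 2
        simp [← Finset.coe_orderIsoOfFin_apply]
  rw [key, ← Finset.powerset_univ, Finset.sum_powerset_apply_card (fun j => omegaSkK t j)]
  simp [Finset.card_univ]

theorem omegaSkK_eq_zero {t : PTree} {k : ℕ} (h : numInternal t < k) : omegaSkK t k = 0 := by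
  have : IsEmpty {f : {p : List ℕ // IsInternalAt t p} → Fin k //
      Function.Surjective f ∧ ∀ v w, v.1 <+: w.1 → v ≠ w → f v < f w} := by
    refine ⟨fun f => h.not_ge ?_⟩
    rw [numInternal]
    simpa using Nat.card_le_card_of_surjective f.1 f.2.1
  rw [omegaSkK, Nat.card_of_isEmpty]

/-- Binomial inversion of `strictCount_eq_sum_choose`. -/
theorem omegaSkK_eq_fwdDiff (t : PTree) (k : ℕ) :
    (omegaSkK t k : ℂ) = (fwdDiff 1)^[k] (fun j : ℕ => (strictCount t j : ℂ)) 0 := by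
  induction k using Nat.strong_induction_on with
  | _ k ih =>
    have h := shift_eq_sum_fwdDiff_iter (1 : ℕ) (fun j => (strictCount t j : ℂ)) k 0
    simp only [zero_add, smul_eq_mul, mul_one, nsmul_eq_mul] at h
    rw [strictCount_eq_sum_choose, Nat.cast_sum, Finset.sum_range_succ, Finset.sum_range_succ,
      Finset.sum_congr rfl fun j hj => by
        rw [Nat.cast_mul, ih j (Finset.mem_range.1 hj)]] at h
    simpa using h

section LogStar

variable {A : Type*} [Ring A]

/-- The number of strict labellings by `Fin k` of a decorated tree, weighted by `phiPi`. -/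
noncomputable def labelWeight (φ : A → ℂ) (k : ℕ) (d : PTree × List A) : ℂ :=
  strictCount d.1 k * phiPi φ d.1 d.2

theorem labelWeight_succ (φ : A → ℂ) (k : ℕ) {d : PTree × List A} (hd : GoodTree d) :
    labelWeight φ k d + φ (blockWord d.1 [] d.2).prod * ((kids d).map (labelWeight φ k)).prod =
      labelWeight φ (k + 1) d := by
  obtain ⟨⟨cs⟩, w⟩ := d
  obtain ⟨hs, hne, hw⟩ := hd
  have hne : cs ≠ [] := fun h => hne (by rw [h])
  rw [kids, prod_prunePart_kidCut _ _ _ fun u => by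
    simp [labelWeight, strictCount_leaf, phiPi_leaf]]
  simp only [labelWeight]
  rw [Finset.prod_mul_distrib, phiPi_node φ hs hne hw, strictCount_node_succ hne, Nat.cast_add,
    Nat.cast_prod]
  ring

theorem convD_charD_labelWeight (φ : A → ℂ) (k : ℕ) {F : DForest A} (hF : GoodForest F) :
    convD (charD φ) (fun P => (P.map (labelWeight φ k)).prod) F =
      (F.map (labelWeight φ (k + 1))).prod := by
  rw [convD_charD_prod φ _ hF]
  exact congrArg List.prod (List.map_congr_left fun d hd => labelWeight_succ φ k (hF d hd))

theorem convPowD_charHatD (φ : A → ℂ) (k : ℕ) {F : DForest A} (hF : GoodForest F) :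
    convPowD (charHatD φ) k F =
      (fwdDiff 1)^[k] (fun j : ℕ => (F.map (labelWeight φ j)).prod) 0 := by
  induction k generalizing F with
  | zero =>
    cases F with
    | nil => simp [convPowD, epsD]
    | cons d F =>
      simp [convPowD, epsD, labelWeight, strictCount_zero (hF d List.mem_cons_self).2.1]
  | succ k ih =>
    have hsum (P : DForest A) (y : ℕ) :
        (fwdDiff 1)^[k] (fun j : ℕ => (P.map (labelWeight φ j)).prod) y =
          ∑ j ∈ Finset.range (k + 1),
            ((((-1 : ℤ) ^ (k - j) * k.choose j : ℤ)) : ℂ) *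
              (P.map (labelWeight φ (y + j))).prod := by
      rw [fwdDiff_iter_eq_sum_shift]
      simp [zsmul_eq_mul]
    rw [Function.iterate_succ_apply', fwdDiff, ← ih hF]
    change convD (fun P => charD φ P - epsD P) _ F = _
    rw [convD_sub_left, convD_epsD _ hF, convD_charD_congr φ (fun P hP => ih hP) hF]
    simp only [hsum]
    rw [convD_sum_right]
    simp only [zero_add, convD_charD_labelWeight φ _ hF, add_comm 1]

theorem convPowD_charHatD_singleton (φ : A → ℂ) (k : ℕ) {d : PTree × List A} (hd : GoodTree d) :
    convPowD (charHatD φ) k [d] = omegaSkK d.1 k * phiPi φ d.1 d.2 := by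
  rw [convPowD_charHatD φ k fun e he => by rwa [List.mem_singleton.1 he], omegaSkK_eq_fwdDiff,
    fwdDiff_iter_eq_sum_shift, fwdDiff_iter_eq_sum_shift, Finset.sum_mul]
  refine Finset.sum_congr rfl fun j _ => ?_
  simp [labelWeight, mul_assoc]

theorem logStarD_singleton (φ : A → ℂ) {d : PTree × List A} (hd : GoodTree d) :
    logStarD φ [d] = omegaSk d.1 * phiPi φ d.1 d.2 := by
  rw [logStarD, omegaSk, Finset.sum_mul]
  rw [finsum_mem_eq_sum_of_inter_support_eq (t := Finset.Icc 1 (numInternal d.1))]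
  · exact Finset.sum_congr rfl fun k _ => by rw [convPowD_charHatD_singleton φ k hd, mul_assoc]
  · ext k
    simp only [Set.mem_inter_iff, Set.mem_Ici, Function.mem_support, Finset.coe_Icc, Set.mem_Icc]
    constructor
    · rintro ⟨h1, h2⟩
      refine ⟨⟨h1, not_lt.1 fun h => h2 ?_⟩, h2⟩
      rw [convPowD_charHatD_singleton φ k hd, omegaSkK_eq_zero h]
      simp
    · rintro ⟨h1, h2⟩
      exact ⟨h1.1, h2⟩

end LogStar

end PTree

/-- Let `(A, φ)` be a noncommutative probability space, `Φ̃ : H_S(A) → ℂ`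
the character extending `φ`, and `ρ̃ = log^*(Φ̃) = Σ_{k≥1} ((−1)^{k+1}/k) (Φ̃ − ε_A)^{*k}`.
Then for every `n ≥ 1`, every `t ∈ ST(n)` and every word `w = a_1 ⋯ a_n`:
`ρ̃(t ⊗ w) = ω(sk(t)) · φ_{π(t)}(a_1,…,a_n)`. -/
theorem logStar_on_decorated_schroder_trees
    (A : Type*) [Ring A] [Algebra ℂ A] (φ : A →ₗ[ℂ] ℂ) (hφ : φ 1 = 1)
    (n : ℕ) (hn : 1 ≤ n) (t : PTree) (ht : t ∈ PTree.ST n)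
    (w : List A) (hw : w.length = n) :
    PTree.logStarD (fun x => φ x) [(t, w)] =
      PTree.omegaSk t * PTree.phiPi (fun x => φ x) t w := by
  refine PTree.logStarD_singleton (fun x => φ x) ⟨ht.1, ?_, ?_⟩
  · rintro rfl
    have := ht.2
    rw [PTree.numLeaves_leaf] at this
    omega
  · rw [hw, PTree.numSectors, ht.2, Nat.add_sub_cancel]
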